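/- For all n, k ∈ ℕ, the rules of Str(DS) — label substitution, weakening, contraction of relational and deontic atoms and of labelled formulae, and cut — are admissible in DS_n^k L: every labelled sequent derivable in DS_n^k L + Str(DS) is derivable in DS_n^k L. -/

import Mathlib

/-!
Labelled sequent calculi for deontic STIT logics `DS_n^k`.
-/

namespace DeonticStit

/-- Deontic STIT formulae in negation normal form, with agents in `Fin (n+1)`:
literals `p`, `p̄` and the connectives `∨`, `∧`, `□`, `◇`, `[i]`, `⟨i⟩`,
`⊗_i`, `⊖_i`. -/
inductive SFml (n : ℕ) : Type
  | pos : ℕ → SFml n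
  | neg : ℕ → SFml n
  | or  : SFml n → SFml n → SFml n
  | and : SFml n → SFml n → SFml n
  | box : SFml n → SFml n
  | dia : SFml n → SFml n
  | abox : Fin (n + 1) → SFml n → SFml n
  | adia : Fin (n + 1) → SFml n → SFml n
  | obl : Fin (n + 1) → SFml n → SFml n
  | per : Fin (n + 1) → SFml n → SFml n

/-- Multisets of relational atoms `R_[i] w u`. -/
abbrev RAt (n : ℕ) : Type := Multiset (Fin (n + 1) × ℕ × ℕ)

/-- Multisets of deontic atoms `I_{⊗_i} u`. -/
abbrev DAt (n : ℕ) : Type := Multiset (Fin (n + 1) × ℕ)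

/-- Multisets of labelled formulae `w : φ`. -/
abbrev SSeq (n : ℕ) : Type := Multiset (ℕ × SFml n)

/-- The label `v` occurs in the labelled sequent `RA, IA ⊢ Γ`. -/
def soccurs {n : ℕ} (v : ℕ) (RA : RAt n) (IA : DAt n) (Γ : SSeq n) : Prop :=
  (∃ i w u, (i, w, u) ∈ RA ∧ (v = w ∨ v = u)) ∨ (∃ i, (i, v) ∈ IA) ∨ ∃ φ, (v, φ) ∈ Γ

/-- Undirected `i`-paths: `IPath RA i w u` holds iff `w = u` or there is a
sequence of atoms, each of the form `R_[i] v z` or `R_[i] z v`, linking `w`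
to `u`. -/
inductive IPath {n : ℕ} (RA : RAt n) (i : Fin (n + 1)) : ℕ → ℕ → Prop
  | refl (w : ℕ) : IPath RA i w w
  | fwd {w u v : ℕ} : (i, w, u) ∈ RA → IPath RA i u v → IPath RA i w v
  | bwd {w u v : ℕ} : (i, u, w) ∈ RA → IPath RA i u v → IPath RA i w v

/-- The negation-normal-form negation `φ̄` of a deontic STIT formula. -/
def SFml.negnnf {n : ℕ} : SFml n → SFml n
  | SFml.pos p => SFml.neg p
  | SFml.neg p => SFml.pos p
  | SFml.or φ ψ => SFml.and φ.negnnf ψ.negnnf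
  | SFml.and φ ψ => SFml.or φ.negnnf ψ.negnnf
  | SFml.box φ => SFml.dia φ.negnnf
  | SFml.dia φ => SFml.box φ.negnnf
  | SFml.abox i φ => SFml.adia i φ.negnnf
  | SFml.adia i φ => SFml.abox i φ.negnnf
  | SFml.obl i φ => SFml.per i φ.negnnf
  | SFml.per i φ => SFml.obl i φ.negnnf

/-- Substitution of the label `w` for the label `u`. -/
def substLbl (w u v : ℕ) : ℕ := if v = u then w else v

/-- Label substitution on relational atoms. -/
def substRAt {n : ℕ} (w u : ℕ) (RA : RAt n) : RAt n :=
  RA.map fun t => (t.1, substLbl w u t.2.1, substLbl w u t.2.2)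

/-- Label substitution on deontic atoms. -/
def substDAt {n : ℕ} (w u : ℕ) (IA : DAt n) : DAt n :=
  IA.map fun t => (t.1, substLbl w u t.2)

/-- Label substitution on labelled formulae. -/
def substSSeq {n : ℕ} (w u : ℕ) (Γ : SSeq n) : SSeq n :=
  Γ.map fun t => (substLbl w u t.1, t.2)

/-- Gated labelled sequent calculi for deontic STIT logics.  The rules `(id)`,
`(∨r)`, `(∧r)`, `(◇)`, `(□)`, `([i])`, `(⊗_i)`, `(IOA)` and (for `k > 0`)
`(APC_i^k)` are always present; the propagation rules `(Pr_⟨i⟩)`, `(Pr_⊖i¹)`,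
`(Pr_⊖i²)` are present exactly when the gate `gR` holds; the rules `(⟨i⟩)`,
`(⊖_i)` and the structural rules `(ref_i)`, `(euc_i)`, `(D2^i)`, `(D3^i)` are
present exactly when the gate `gG` holds; and the rules of `Str(DS)` (label
substitution, weakening, contractions, cut) are present exactly when the gate
`gS` holds.  In particular `SDer n k False True False` is `G3DS_n^k`,
`SDer n k True False False` is `DS_n^k L`, and `SDer n k True False True` is
`DS_n^k L + Str(DS)`. -/
inductive SDer (n k : ℕ) (gR gG gS : Prop) : RAt n → DAt n → SSeq n → Prop
  | id (RA : RAt n) (IA : DAt n) (Γ : SSeq n) (w p : ℕ) :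
      SDer n k gR gG gS RA IA ((w, SFml.pos p) ::ₘ (w, SFml.neg p) ::ₘ Γ)
  | orr {RA : RAt n} {IA : DAt n} {Γ : SSeq n} {w : ℕ} {φ ψ : SFml n} :
      SDer n k gR gG gS RA IA ((w, φ) ::ₘ (w, ψ) ::ₘ Γ) →
      SDer n k gR gG gS RA IA ((w, SFml.or φ ψ) ::ₘ Γ)
  | andr {RA : RAt n} {IA : DAt n} {Γ : SSeq n} {w : ℕ} {φ ψ : SFml n} :
      SDer n k gR gG gS RA IA ((w, φ) ::ₘ Γ) →
      SDer n k gR gG gS RA IA ((w, ψ) ::ₘ Γ) →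
      SDer n k gR gG gS RA IA ((w, SFml.and φ ψ) ::ₘ Γ)
  | diar {RA : RAt n} {IA : DAt n} {Γ : SSeq n} {w u : ℕ} {φ : SFml n} :
      SDer n k gR gG gS RA IA ((w, SFml.dia φ) ::ₘ (u, φ) ::ₘ Γ) →
      SDer n k gR gG gS RA IA ((w, SFml.dia φ) ::ₘ Γ)
  | boxr {RA : RAt n} {IA : DAt n} {Γ : SSeq n} {w u : ℕ} {φ : SFml n} :
      ¬ soccurs u RA IA ((w, SFml.box φ) ::ₘ Γ) →
      SDer n k gR gG gS RA IA ((u, φ) ::ₘ Γ) →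
      SDer n k gR gG gS RA IA ((w, SFml.box φ) ::ₘ Γ)
  | aboxr {RA : RAt n} {IA : DAt n} {Γ : SSeq n} {w u : ℕ} {i : Fin (n + 1)}
      {φ : SFml n} :
      ¬ soccurs u RA IA ((w, SFml.abox i φ) ::ₘ Γ) →
      SDer n k gR gG gS ((i, w, u) ::ₘ RA) IA ((u, φ) ::ₘ Γ) →
      SDer n k gR gG gS RA IA ((w, SFml.abox i φ) ::ₘ Γ)
  | oblr {RA : RAt n} {IA : DAt n} {Γ : SSeq n} {w u : ℕ} {i : Fin (n + 1)}
      {φ : SFml n} :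
      ¬ soccurs u RA IA ((w, SFml.obl i φ) ::ₘ Γ) →
      SDer n k gR gG gS RA ((i, u) ::ₘ IA) ((u, φ) ::ₘ Γ) →
      SDer n k gR gG gS RA IA ((w, SFml.obl i φ) ::ₘ Γ)
  | ioa {RA : RAt n} {IA : DAt n} {Γ : SSeq n} (ws : Fin (n + 1) → ℕ) (u : ℕ) :
      ¬ soccurs u RA IA Γ →
      SDer n k gR gG gS ((Finset.univ.val.map fun i => (i, ws i, u)) + RA) IA Γ →
      SDer n k gR gG gS RA IA Γ
  | apc {RA : RAt n} {IA : DAt n} {Γ : SSeq n} (hk : 0 < k) (i : Fin (n + 1))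
      (ws : Fin (k + 1) → ℕ) :
      (∀ m j : Fin (k + 1), (m : ℕ) < (j : ℕ) →
        SDer n k gR gG gS ((i, ws m, ws j) ::ₘ RA) IA Γ) →
      SDer n k gR gG gS RA IA Γ
  | prAdia {RA : RAt n} {IA : DAt n} {Γ : SSeq n} {u v : ℕ} {i : Fin (n + 1)}
      {φ : SFml n} :
      gR → IPath RA i u v →
      SDer n k gR gG gS RA IA ((u, SFml.adia i φ) ::ₘ (v, φ) ::ₘ Γ) →
      SDer n k gR gG gS RA IA ((u, SFml.adia i φ) ::ₘ Γ)
  | prPer1 {RA : RAt n} {IA : DAt n} {Γ : SSeq n} {w u v : ℕ} {i : Fin (n + 1)}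
      {φ : SFml n} :
      gR → IPath RA i u v →
      SDer n k gR gG gS RA ((i, u) ::ₘ IA) ((w, SFml.per i φ) ::ₘ (v, φ) ::ₘ Γ) →
      SDer n k gR gG gS RA ((i, u) ::ₘ IA) ((w, SFml.per i φ) ::ₘ Γ)
  | prPer2 {RA : RAt n} {IA : DAt n} {Γ : SSeq n} {w u : ℕ} {i : Fin (n + 1)}
      {φ : SFml n} :
      gR → ¬ soccurs u RA IA ((w, SFml.per i φ) ::ₘ Γ) →
      SDer n k gR gG gS RA ((i, u) ::ₘ IA) ((w, SFml.per i φ) ::ₘ (u, φ) ::ₘ Γ) →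
      SDer n k gR gG gS RA IA ((w, SFml.per i φ) ::ₘ Γ)
  | adiar {RA : RAt n} {IA : DAt n} {Γ : SSeq n} {w u : ℕ} {i : Fin (n + 1)}
      {φ : SFml n} :
      gG →
      SDer n k gR gG gS ((i, w, u) ::ₘ RA) IA
        ((w, SFml.adia i φ) ::ₘ (u, φ) ::ₘ Γ) →
      SDer n k gR gG gS ((i, w, u) ::ₘ RA) IA ((w, SFml.adia i φ) ::ₘ Γ)
  | operr {RA : RAt n} {IA : DAt n} {Γ : SSeq n} {w u : ℕ} {i : Fin (n + 1)}
      {φ : SFml n} :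
      gG →
      SDer n k gR gG gS RA ((i, u) ::ₘ IA) ((w, SFml.per i φ) ::ₘ (u, φ) ::ₘ Γ) →
      SDer n k gR gG gS RA ((i, u) ::ₘ IA) ((w, SFml.per i φ) ::ₘ Γ)
  | refl {RA : RAt n} {IA : DAt n} {Γ : SSeq n} {w : ℕ} {i : Fin (n + 1)} :
      gG → SDer n k gR gG gS ((i, w, w) ::ₘ RA) IA Γ →
      SDer n k gR gG gS RA IA Γ
  | euc {RA : RAt n} {IA : DAt n} {Γ : SSeq n} {w u v : ℕ} {i : Fin (n + 1)} :
      gG →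
      SDer n k gR gG gS ((i, w, u) ::ₘ (i, w, v) ::ₘ (i, u, v) ::ₘ RA) IA Γ →
      SDer n k gR gG gS ((i, w, u) ::ₘ (i, w, v) ::ₘ RA) IA Γ
  | d2 {RA : RAt n} {IA : DAt n} {Γ : SSeq n} {u : ℕ} {i : Fin (n + 1)} :
      gG → ¬ soccurs u RA IA Γ →
      SDer n k gR gG gS RA ((i, u) ::ₘ IA) Γ →
      SDer n k gR gG gS RA IA Γ
  | d3 {RA : RAt n} {IA : DAt n} {Γ : SSeq n} {w u : ℕ} {i : Fin (n + 1)} :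
      gG →
      SDer n k gR gG gS ((i, w, u) ::ₘ RA) ((i, w) ::ₘ (i, u) ::ₘ IA) Γ →
      SDer n k gR gG gS ((i, w, u) ::ₘ RA) ((i, w) ::ₘ IA) Γ
  | subst {RA : RAt n} {IA : DAt n} {Γ : SSeq n} (w u : ℕ) :
      gS → SDer n k gR gG gS RA IA Γ →
      SDer n k gR gG gS (substRAt w u RA) (substDAt w u IA) (substSSeq w u Γ)
  | wk {RA RA' : RAt n} {IA IA' : DAt n} {Γ Γ' : SSeq n} :
      gS → SDer n k gR gG gS RA IA Γ →
      SDer n k gR gG gS (RA + RA') (IA + IA') (Γ + Γ')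
  | ctrR {RA : RAt n} {IA : DAt n} {Γ : SSeq n} (a : Fin (n + 1) × ℕ × ℕ) :
      gS → SDer n k gR gG gS (a ::ₘ a ::ₘ RA) IA Γ →
      SDer n k gR gG gS (a ::ₘ RA) IA Γ
  | ctrI {RA : RAt n} {IA : DAt n} {Γ : SSeq n} (b : Fin (n + 1) × ℕ) :
      gS → SDer n k gR gG gS RA (b ::ₘ b ::ₘ IA) Γ →
      SDer n k gR gG gS RA (b ::ₘ IA) Γ
  | ctrF {RA : RAt n} {IA : DAt n} {Γ : SSeq n} (w : ℕ) (φ : SFml n) :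
      gS → SDer n k gR gG gS RA IA ((w, φ) ::ₘ (w, φ) ::ₘ Γ) →
      SDer n k gR gG gS RA IA ((w, φ) ::ₘ Γ)
  | cut {RA : RAt n} {IA : DAt n} {Γ : SSeq n} (w : ℕ) (φ : SFml n) :
      gS → SDer n k gR gG gS RA IA ((w, φ) ::ₘ Γ) →
      SDer n k gR gG gS RA IA ((w, SFml.negnnf φ) ::ₘ Γ) →
      SDer n k gR gG gS RA IA Γ

/-- The labelled calculus `G3DS_n^k`. -/
abbrev G3DS (n k : ℕ) : RAt n → DAt n → SSeq n → Prop := SDer n k False True False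

/-- The refined labelled calculus `DS_n^k L`. -/
abbrev DSL (n k : ℕ) : RAt n → DAt n → SSeq n → Prop := SDer n k True False False

/-- The calculus `DS_n^k L + Str(DS)`. -/
abbrev DSLStr (n k : ℕ) : RAt n → DAt n → SSeq n → Prop := SDer n k True False True

/-! ### Semantics over the fixed domain `ℕ` -/

/-- Deontic STIT models with domain `ℕ`. -/
structure Mdl (n k : ℕ) where
  R : Fin (n + 1) → ℕ → ℕ → Prop
  rfl' : ∀ i w, R i w w
  symm' : ∀ i w u, R i w u → R i u w
  trans' : ∀ i w u v, R i w u → R i u v → R i w v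
  ioa : ∀ ws : Fin (n + 1) → ℕ, ∃ u, ∀ i, R i (ws i) u
  apc : 0 < k → ∀ (i : Fin (n + 1)) (ws : Fin (k + 1) → ℕ),
    ∃ m j : Fin (k + 1), (m : ℕ) < (j : ℕ) ∧ R i (ws m) (ws j)
  I : Fin (n + 1) → ℕ → Prop
  ne : ∀ i, ∃ u, I i u
  cl : ∀ i u v, I i u → R i u v → I i v
  V : ℕ → ℕ → Prop

/-- Truth of a formula at a world. -/
def sat {n k : ℕ} (M : Mdl n k) : SFml n → ℕ → Prop
  | SFml.pos p, w => M.V p w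
  | SFml.neg p, w => ¬ M.V p w
  | SFml.or φ ψ, w => sat M φ w ∨ sat M ψ w
  | SFml.and φ ψ, w => sat M φ w ∧ sat M ψ w
  | SFml.box φ, _ => ∀ u, sat M φ u
  | SFml.dia φ, _ => ∃ u, sat M φ u
  | SFml.abox i φ, w => ∀ u, M.R i w u → sat M φ u
  | SFml.adia i φ, w => ∃ u, M.R i w u ∧ sat M φ u
  | SFml.obl i φ, _ => ∀ u, M.I i u → sat M φ u
  | SFml.per i φ, _ => ∃ u, M.I i u ∧ sat M φ u

theorem sat_negnnf {n k : ℕ} (M : Mdl n k) (φ : SFml n) :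
    ∀ w, sat M φ.negnnf w ↔ ¬ sat M φ w := by
  induction φ <;> intro w <;> simp_all [sat, SFml.negnnf, not_or, imp_iff_not_or]
  

theorem sat_path {n k : ℕ} (M : Mdl n k) {RA : RAt n} {i : Fin (n + 1)} {u v : ℕ}
    (σ : ℕ → ℕ) (hR : ∀ t ∈ RA, M.R t.1 (σ t.2.1) (σ t.2.2))
    (h : IPath RA i u v) : M.R i (σ u) (σ v) := by
  induction h with
  | refl w => exact M.rfl' _ _
  | fwd h _ ih => exact M.trans' _ _ _ _ (hR _ h) ih
  | bwd h _ ih => exact M.trans' _ _ _ _ (M.symm' _ _ _ (hR _ h)) ih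

/-- Validity of a sequent in a model under an interpretation of the labels. -/
def Holds {n k : ℕ} (M : Mdl n k) (σ : ℕ → ℕ) (RA : RAt n) (IA : DAt n) (Γ : SSeq n) : Prop :=
  (∀ t ∈ RA, M.R t.1 (σ t.2.1) (σ t.2.2)) → (∀ t ∈ IA, M.I t.1 (σ t.2)) →
    ∃ t ∈ Γ, sat M t.2 (σ t.1)

section fresh
variable {n k : ℕ} {M : Mdl n k} {σ : ℕ → ℕ} {RA : RAt n} {IA : DAt n} {Γ : SSeq n} {u x : ℕ}

theorem upd_R (hu : ¬ soccurs u RA IA Γ)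
    (hR : ∀ t ∈ RA, M.R t.1 (σ t.2.1) (σ t.2.2)) :
    ∀ t ∈ RA, M.R t.1 (Function.update σ u x t.2.1) (Function.update σ u x t.2.2) := by
  rintro ⟨i, a, b⟩ h
  have ha : a ≠ u := fun e => hu (Or.inl ⟨i, a, b, h, Or.inl e.symm⟩)
  have hb : b ≠ u := fun e => hu (Or.inl ⟨i, a, b, h, Or.inr e.symm⟩)
  simpa [Function.update_of_ne, ha, hb] using hR _ h

theorem upd_I (hu : ¬ soccurs u RA IA Γ) (hI : ∀ t ∈ IA, M.I t.1 (σ t.2)) :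
    ∀ t ∈ IA, M.I t.1 (Function.update σ u x t.2) := by
  rintro ⟨i, a⟩ h
  have ha : a ≠ u := fun e => hu (Or.inr (Or.inl ⟨i, e ▸ h⟩))
  simpa [Function.update_of_ne, ha] using hI _ h

theorem upd_F (hu : ¬ soccurs u RA IA Γ) {t : ℕ × SFml n} (ht : t ∈ Γ) :
    Function.update σ u x t.1 = σ t.1 := by
  have ha : t.1 ≠ u := fun e => hu (Or.inr (Or.inr ⟨t.2, e ▸ ht⟩))
  simp [Function.update_of_ne, ha]

end fresh

theorem soundness {n k : ℕ} (M : Mdl n k) {RA : RAt n} {IA : DAt n} {Γ : SSeq n}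
    (h : DSLStr n k RA IA Γ) : ∀ σ, Holds M σ RA IA Γ := by
  induction h with
  | id RA IA Γ w p =>
    intro σ _ _
    by_cases hp : M.V p (σ w)
    · exact ⟨(w, SFml.pos p), by simp, hp⟩
    · exact ⟨(w, SFml.neg p), by simp, hp⟩
  | @orr RA IA Γ w φ ψ _ ih =>
    intro σ hR hI
    obtain ⟨t, ht, hs⟩ := ih σ hR hI
    simp only [Multiset.mem_cons] at ht
    rcases ht with rfl | rfl | ht
    · exact ⟨_, Multiset.mem_cons_self _ _, Or.inl hs⟩
    · exact ⟨_, Multiset.mem_cons_self _ _, Or.inr hs⟩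
    · exact ⟨t, Multiset.mem_cons_of_mem ht, hs⟩
  | @andr RA IA Γ w φ ψ _ _ ih1 ih2 =>
    intro σ hR hI
    obtain ⟨t, ht, hs⟩ := ih1 σ hR hI
    obtain ⟨t', ht', hs'⟩ := ih2 σ hR hI
    rw [Multiset.mem_cons] at ht ht'
    rcases ht with rfl | ht
    · rcases ht' with rfl | ht'
      · exact ⟨_, Multiset.mem_cons_self _ _, hs, hs'⟩
      · exact ⟨t', Multiset.mem_cons_of_mem ht', hs'⟩
    · exact ⟨t, Multiset.mem_cons_of_mem ht, hs⟩
  | @diar RA IA Γ w u φ _ ih =>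
    intro σ hR hI
    obtain ⟨t, ht, hs⟩ := ih σ hR hI
    simp only [Multiset.mem_cons] at ht
    rcases ht with rfl | rfl | ht
    · exact ⟨_, Multiset.mem_cons_self _ _, hs⟩
    · exact ⟨_, Multiset.mem_cons_self _ _, _, hs⟩
    · exact ⟨t, Multiset.mem_cons_of_mem ht, hs⟩
  | @boxr RA IA Γ w u φ hu _ ih =>
    intro σ hR hI
    by_contra hc
    refine hc ⟨_, Multiset.mem_cons_self _ _, fun x => ?_⟩
    obtain ⟨t, ht, hs⟩ := ih (Function.update σ u x) (upd_R hu hR) (upd_I hu hI)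
    rw [Multiset.mem_cons] at ht
    rcases ht with rfl | ht
    · simpa using hs
    · rw [upd_F hu (Multiset.mem_cons_of_mem ht)] at hs
      exact (hc ⟨t, Multiset.mem_cons_of_mem ht, hs⟩).elim
  | @aboxr RA IA Γ w u i φ hu _ ih =>
    intro σ hR hI
    by_contra hc
    refine hc ⟨_, Multiset.mem_cons_self _ _, fun x hx => ?_⟩
    have hw := upd_F (σ := σ) (x := x) hu (Multiset.mem_cons_self _ _)
    obtain ⟨t, ht, hs⟩ := ih (Function.update σ u x) (by
      intro t ht
      rw [Multiset.mem_cons] at ht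
      rcases ht with rfl | ht
      · simpa [hw] using hx
      · exact upd_R hu hR t ht) (upd_I hu hI)
    rw [Multiset.mem_cons] at ht
    rcases ht with rfl | ht
    · simpa using hs
    · rw [upd_F hu (Multiset.mem_cons_of_mem ht)] at hs
      exact (hc ⟨t, Multiset.mem_cons_of_mem ht, hs⟩).elim
  | @oblr RA IA Γ w u i φ hu _ ih =>
    intro σ hR hI
    by_contra hc
    refine hc ⟨_, Multiset.mem_cons_self _ _, fun x hx => ?_⟩
    obtain ⟨t, ht, hs⟩ := ih (Function.update σ u x) (upd_R hu hR) (by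
      intro t ht
      rw [Multiset.mem_cons] at ht
      rcases ht with rfl | ht
      · simpa using hx
      · exact upd_I hu hI t ht)
    rw [Multiset.mem_cons] at ht
    rcases ht with rfl | ht
    · simpa using hs
    · rw [upd_F hu (Multiset.mem_cons_of_mem ht)] at hs
      exact (hc ⟨t, Multiset.mem_cons_of_mem ht, hs⟩).elim
  | @ioa RA IA Γ ws u hu _ ih =>
    intro σ hR hI
    obtain ⟨x, hx⟩ := M.ioa (fun i => σ (ws i))
    obtain ⟨t, ht, hs⟩ := ih (Function.update σ u x) (by
      intro t ht
      rw [Multiset.mem_add] at ht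
      rcases ht with ht | ht
      · obtain ⟨i, _, rfl⟩ := Multiset.mem_map.1 ht
        by_cases hwu : ws i = u
        · simpa [hwu] using M.rfl' i x
        · simpa [Function.update_of_ne, hwu] using hx i
      · exact upd_R hu hR t ht) (upd_I hu hI)
    rw [upd_F hu ht] at hs
    exact ⟨t, ht, hs⟩
  | @apc RA IA Γ hk i ws _ ih =>
    intro σ hR hI
    obtain ⟨m, j, hmj, hr⟩ := M.apc hk i (fun m => σ (ws m))
    refine ih m j hmj σ ?_ hI
    intro t ht
    rw [Multiset.mem_cons] at ht
    rcases ht with rfl | ht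
    · exact hr
    · exact hR t ht
  | @prAdia RA IA Γ u v i φ _ hp _ ih =>
    intro σ hR hI
    obtain ⟨t, ht, hs⟩ := ih σ hR hI
    simp only [Multiset.mem_cons] at ht
    rcases ht with rfl | rfl | ht
    · exact ⟨_, Multiset.mem_cons_self _ _, hs⟩
    · exact ⟨_, Multiset.mem_cons_self _ _, _, sat_path M σ hR hp, hs⟩
    · exact ⟨t, Multiset.mem_cons_of_mem ht, hs⟩
  | @prPer1 RA IA Γ w u v i φ _ hp _ ih =>
    intro σ hR hI
    obtain ⟨t, ht, hs⟩ := ih σ hR hI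
    simp only [Multiset.mem_cons] at ht
    rcases ht with rfl | rfl | ht
    · exact ⟨_, Multiset.mem_cons_self _ _, hs⟩
    · exact ⟨_, Multiset.mem_cons_self _ _, _,
        M.cl _ _ _ (hI _ (Multiset.mem_cons_self _ _)) (sat_path M σ hR hp), hs⟩
    · exact ⟨t, Multiset.mem_cons_of_mem ht, hs⟩
  | @prPer2 RA IA Γ w u i φ _ hu _ ih =>
    intro σ hR hI
    obtain ⟨x, hx⟩ := M.ne i
    obtain ⟨t, ht, hs⟩ := ih (Function.update σ u x) (upd_R hu hR) (by
      intro t ht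
      rw [Multiset.mem_cons] at ht
      rcases ht with rfl | ht
      · simpa using hx
      · exact upd_I hu hI t ht)
    simp only [Multiset.mem_cons] at ht
    rcases ht with rfl | rfl | ht
    · exact ⟨_, Multiset.mem_cons_self _ _, hs⟩
    · exact ⟨_, Multiset.mem_cons_self _ _, x, hx, by simpa using hs⟩
    · rw [upd_F hu (Multiset.mem_cons_of_mem ht)] at hs
      exact ⟨t, Multiset.mem_cons_of_mem ht, hs⟩
  | adiar h => exact h.elim
  | operr h => exact h.elim
  | refl h => exact h.elim
  | euc h => exact h.elim
  | d2 h => exact h.elim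
  | d3 h => exact h.elim
  | @subst RA IA Γ w u _ _ ih =>
    intro σ hR hI
    obtain ⟨t, ht, hs⟩ := ih (fun v => σ (substLbl w u v))
      (fun t ht => hR _ (Multiset.mem_map_of_mem _ ht))
      (fun t ht => hI _ (Multiset.mem_map_of_mem _ ht))
    exact ⟨_, Multiset.mem_map_of_mem _ ht, hs⟩
  | wk _ _ ih =>
    intro σ hR hI
    obtain ⟨t, ht, hs⟩ := ih σ (fun t ht => hR t (Multiset.mem_add.2 (Or.inl ht)))
      (fun t ht => hI t (Multiset.mem_add.2 (Or.inl ht)))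
    exact ⟨t, Multiset.mem_add.2 (Or.inl ht), hs⟩
  | ctrR a _ _ ih =>
    intro σ hR hI
    exact ih σ (fun t ht => hR t (by simpa using ht)) hI
  | ctrI b _ _ ih =>
    intro σ hR hI
    exact ih σ hR (fun t ht => hI t (by simpa using ht))
  | ctrF w φ _ _ ih =>
    intro σ hR hI
    obtain ⟨t, ht, hs⟩ := ih σ hR hI
    exact ⟨t, by simpa using ht, hs⟩
  | cut w φ _ _ _ ih1 ih2 =>
    intro σ hR hI
    obtain ⟨t, ht, hs⟩ := ih1 σ hR hI
    obtain ⟨t', ht', hs'⟩ := ih2 σ hR hI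
    rw [Multiset.mem_cons] at ht ht'
    rcases ht with rfl | ht
    · rcases ht' with rfl | ht'
      · exact absurd hs ((sat_negnnf M φ _).1 hs')
      · exact ⟨t', ht', hs'⟩
    · exact ⟨t, ht, hs⟩

/-! ### Countability of the language -/

/-- A numerical code of formulae. -/
def enc {n : ℕ} : SFml n → ℕ
  | SFml.pos p => Nat.pair 0 p
  | SFml.neg p => Nat.pair 1 p
  | SFml.or φ ψ => Nat.pair 2 (Nat.pair (enc φ) (enc ψ))
  | SFml.and φ ψ => Nat.pair 3 (Nat.pair (enc φ) (enc ψ))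
  | SFml.box φ => Nat.pair 4 (enc φ)
  | SFml.dia φ => Nat.pair 5 (enc φ)
  | SFml.abox i φ => Nat.pair 6 (Nat.pair i (enc φ))
  | SFml.adia i φ => Nat.pair 7 (Nat.pair i (enc φ))
  | SFml.obl i φ => Nat.pair 8 (Nat.pair i (enc φ))
  | SFml.per i φ => Nat.pair 9 (Nat.pair i (enc φ))

theorem enc_inj {n : ℕ} (φ : SFml n) : ∀ ψ, enc φ = enc ψ → φ = ψ := by
  induction φ <;> intro ψ h <;> cases ψ <;>
    simp_all [enc, Nat.pair_eq_pair, Fin.ext_iff] <;> grind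

instance countableSFml {n : ℕ} : Countable (SFml n) :=
  Function.Injective.countable (f := enc) fun a b h => enc_inj a b h

/-! ### Fair backwards proof search -/

/-- A sequent. -/
structure St (n : ℕ) where
  A : RAt n
  D : DAt n
  G : SSeq n

/-- The formulae consumed by their rule. -/
def cons {n : ℕ} : SFml n → Prop
  | SFml.or _ _ => True
  | SFml.and _ _ => True
  | SFml.box _ => True
  | SFml.abox _ _ => True
  | SFml.obl _ _ => True
  | _ => False

/-- The consumable formula `w : φ` has been processed in `s`. -/
def Proc {n : ℕ} (s : St n) (w : ℕ) : SFml n → Prop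
  | SFml.or a b => (w, a) ∈ s.G ∧ (w, b) ∈ s.G
  | SFml.and a b => (w, a) ∈ s.G ∨ (w, b) ∈ s.G
  | SFml.box a => ∃ u, (u, a) ∈ s.G
  | SFml.abox i a => ∃ u, (i, w, u) ∈ s.A ∧ (u, a) ∈ s.G
  | SFml.obl i a => ∃ u, (i, u) ∈ s.D ∧ (u, a) ∈ s.G
  | _ => False

/-- One search step: nothing is lost, except for processed formulae. -/
structure Ext {n : ℕ} (s s' : St n) : Prop where
  A : ∀ t ∈ s.A, t ∈ s'.A
  D : ∀ t ∈ s.D, t ∈ s'.D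
  G : ∀ w φ, (w, φ) ∈ s.G → (w, φ) ∈ s'.G ∨ Proc s' w φ

/-- Underivable sequents. -/
def Und (k : ℕ) {n : ℕ} (s : St n) : Prop := ¬ DSL n k s.A s.D s.G

theorem exists_fresh {n : ℕ} (RA : RAt n) (IA : DAt n) (Γ : SSeq n) :
    ∃ u, ¬ soccurs u RA IA Γ := by
  obtain ⟨u, hu⟩ := Infinite.exists_notMem_finset
    (RA.map (fun t => t.2.1) + RA.map (fun t => t.2.2) + IA.map (fun t => t.2)
      + Γ.map (fun t => t.1)).toFinset
  refine ⟨u, fun h => hu ?_⟩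
  simp only [Multiset.mem_toFinset, Multiset.mem_add, Multiset.mem_map]
  rcases h with ⟨i, a, b, h, rfl | rfl⟩ | ⟨i, h⟩ | ⟨φ, h⟩
  · exact Or.inl (Or.inl (Or.inl ⟨_, h, rfl⟩))
  · exact Or.inl (Or.inl (Or.inr ⟨_, h, rfl⟩))
  · exact Or.inl (Or.inr ⟨_, h, rfl⟩)
  · exact Or.inr ⟨_, h, rfl⟩

theorem Ext.rfl' {n : ℕ} (s : St n) : Ext s s :=
  ⟨fun _ h => h, fun _ h => h, fun _ _ h => Or.inl h⟩

/-- Replacing a processed principal formula is a search step. -/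
theorem ext_of_cons {n : ℕ} {RA RA' : RAt n} {IA IA' : DAt n} {Γ Γ' : SSeq n} {w : ℕ}
    {φ : SFml n} (hA : ∀ t ∈ RA, t ∈ RA') (hD : ∀ t ∈ IA, t ∈ IA') (hG : ∀ t ∈ Γ, t ∈ Γ')
    (hp : (w, φ) ∈ Γ' ∨ Proc ⟨RA', IA', Γ'⟩ w φ) :
    Ext ⟨RA, IA, (w, φ) ::ₘ Γ⟩ ⟨RA', IA', Γ'⟩ := by
  refine ⟨hA, hD, fun v ψ h => ?_⟩
  rcases Multiset.mem_cons.1 h with h | h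
  · cases h; exact hp
  · exact Or.inl (hG _ h)

theorem step_cons {n k : ℕ} (s : St n) (hs : Und k s) (w : ℕ) (φ : SFml n) :
    ∃ s', Und k s' ∧ Ext s s' ∧ ((w, φ) ∈ s.G → cons φ → Proc s' w φ) := by
  by_cases hin : (w, φ) ∈ s.G
  swap
  · exact ⟨s, hs, Ext.rfl' s, fun h => (hin h).elim⟩
  obtain ⟨RA, IA, Γ⟩ := s
  obtain ⟨Γ, rfl⟩ := Multiset.exists_cons_of_mem hin
  have key : ∀ RA' IA' Γ', Und k ⟨RA', IA', Γ'⟩ → (∀ t ∈ RA, t ∈ RA') → (∀ t ∈ IA, t ∈ IA') →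
      (∀ t ∈ Γ, t ∈ Γ') → Proc ⟨RA', IA', Γ'⟩ w φ →
      ∃ s', Und k s' ∧ Ext ⟨RA, IA, (w, φ) ::ₘ Γ⟩ s' ∧
        ((w, φ) ∈ (w, φ) ::ₘ Γ → cons φ → Proc s' w φ) :=
    fun RA' IA' Γ' h1 h2 h3 h4 h5 =>
      ⟨⟨RA', IA', Γ'⟩, h1, ext_of_cons h2 h3 h4 (Or.inr h5), fun _ _ => h5⟩
  obtain ⟨u, hu⟩ := exists_fresh RA IA ((w, φ) ::ₘ Γ)
  cases φ with
  | or a b =>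
    exact key RA IA ((w, a) ::ₘ (w, b) ::ₘ Γ) (fun h => hs (SDer.orr h)) (by simp) (by simp)
      (by simp +contextual) (by simp [Proc])
  | and a b =>
    by_cases ha : Und k ⟨RA, IA, (w, a) ::ₘ Γ⟩
    · exact key _ _ _ ha (by simp) (by simp) (by simp +contextual) (by simp [Proc])
    · by_cases hb : Und k ⟨RA, IA, (w, b) ::ₘ Γ⟩
      · exact key _ _ _ hb (by simp) (by simp) (by simp +contextual) (by simp [Proc])
      · exact (hs (SDer.andr (not_not.1 ha) (not_not.1 hb))).elim
  | box a =>
    exact key RA IA ((u, a) ::ₘ Γ) (fun h => hs (SDer.boxr hu h)) (by simp) (by simp)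
      (by simp +contextual) ⟨u, by simp⟩
  | abox i a =>
    exact key ((i, w, u) ::ₘ RA) IA ((u, a) ::ₘ Γ) (fun h => hs (SDer.aboxr hu h))
      (fun t h => Multiset.mem_cons_of_mem h) (by simp)
      (fun t h => Multiset.mem_cons_of_mem h) ⟨u, by simp⟩
  | obl i a =>
    exact key RA ((i, u) ::ₘ IA) ((u, a) ::ₘ Γ) (fun h => hs (SDer.oblr hu h)) (by simp)
      (fun t h => Multiset.mem_cons_of_mem h)
      (fun t h => Multiset.mem_cons_of_mem h) ⟨u, by simp⟩
  | _ => exact ⟨_, hs, Ext.rfl' _, fun _ h => h.elim⟩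

/-- The label `v` is a legitimate target of propagation of the formula `w : φ`. -/
def Tgt {n : ℕ} (s : St n) (w v : ℕ) (a : SFml n) : SFml n → Prop
  | SFml.dia b => a = b
  | SFml.adia i b => a = b ∧ IPath s.A i w v
  | SFml.per i b => a = b ∧ ∃ u, (i, u) ∈ s.D ∧ IPath s.A i u v
  | _ => False

theorem step_prop {n k : ℕ} (s : St n) (hs : Und k s) (w v : ℕ) (φ : SFml n) :
    ∃ s', Und k s' ∧ Ext s s' ∧ ((w, φ) ∈ s.G → ∀ a, Tgt s w v a φ → (v, a) ∈ s'.G) := by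
  by_cases hin : (w, φ) ∈ s.G ∧ ∃ a, Tgt s w v a φ
  swap
  · exact ⟨s, hs, Ext.rfl' s, fun h a ha => (hin ⟨h, a, ha⟩).elim⟩
  obtain ⟨hin, a, ha⟩ := hin
  obtain ⟨RA, IA, Γ⟩ := s
  obtain ⟨Γ, rfl⟩ := Multiset.exists_cons_of_mem hin
  refine ⟨⟨RA, IA, (w, φ) ::ₘ (v, a) ::ₘ Γ⟩, ?_, ?_, ?_⟩
  · intro h
    cases φ with
    | dia b => cases ha; exact hs (SDer.diar h)
    | adia i b => obtain ⟨rfl, hp⟩ := ha; exact hs (SDer.prAdia trivial hp h)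
    | per i b =>
      obtain ⟨rfl, u, hu, hp⟩ := ha
      obtain ⟨IA, rfl⟩ := Multiset.exists_cons_of_mem hu
      exact hs (SDer.prPer1 trivial hp h)
    | _ => exact ha.elim
  · exact ext_of_cons (by simp) (by simp) (by simp +contextual) (by simp)
  · intro _ a' ha'
    have : a' = a := by
      cases φ <;> simp_all [Tgt]
    simp [this]

theorem step_per {n k : ℕ} (s : St n) (hs : Und k s) (w : ℕ) (φ : SFml n) :
    ∃ s', Und k s' ∧ Ext s s' ∧
      ((w, φ) ∈ s.G → ∀ i a, φ = SFml.per i a → ∃ u, (i, u) ∈ s'.D) := by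
  by_cases hin : (w, φ) ∈ s.G ∧ ∃ i a, φ = SFml.per i a
  swap
  · exact ⟨s, hs, Ext.rfl' s, fun h i a ha => (hin ⟨h, i, a, ha⟩).elim⟩
  obtain ⟨hin, i, a, rfl⟩ := hin
  obtain ⟨RA, IA, Γ⟩ := s
  obtain ⟨Γ, rfl⟩ := Multiset.exists_cons_of_mem hin
  obtain ⟨u, hu⟩ := exists_fresh RA IA ((w, SFml.per i a) ::ₘ Γ)
  refine ⟨⟨RA, (i, u) ::ₘ IA, (w, SFml.per i a) ::ₘ (u, a) ::ₘ Γ⟩, ?_, ?_, ?_⟩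
  · exact fun h => hs (SDer.prPer2 trivial hu h)
  · exact ext_of_cons (by simp) (fun t h => Multiset.mem_cons_of_mem h)
      (by simp +contextual) (by simp)
  · intro _ i' a' h
    cases h
    exact ⟨u, by simp⟩

theorem step_ioa {n k : ℕ} (s : St n) (hs : Und k s) (ws : Fin (n + 1) → ℕ) :
    ∃ s', Und k s' ∧ Ext s s' ∧ ∃ u, ∀ i, (i, ws i, u) ∈ s'.A := by
  obtain ⟨u, hu⟩ := exists_fresh s.A s.D s.G
  refine ⟨⟨(Finset.univ.val.map fun i => (i, ws i, u)) + s.A, s.D, s.G⟩,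
    fun h => hs (SDer.ioa ws u hu h), ⟨fun t h => Multiset.mem_add.2 (Or.inr h),
    fun _ h => h, fun _ _ h => Or.inl h⟩, u, fun i => ?_⟩
  exact Multiset.mem_add.2 (Or.inl (Multiset.mem_map.2 ⟨i, by simp, rfl⟩))

theorem step_apc {n k : ℕ} (s : St n) (hs : Und k s) (i : Fin (n + 1)) (ws : Fin (k + 1) → ℕ) :
    ∃ s', Und k s' ∧ Ext s s' ∧ (0 < k → ∃ m j : Fin (k + 1), (m : ℕ) < (j : ℕ) ∧
      (i, ws m, ws j) ∈ s'.A) := by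
  by_cases hk : 0 < k
  swap
  · exact ⟨s, hs, Ext.rfl' s, fun h => (hk h).elim⟩
  have : ∃ m j : Fin (k + 1), (m : ℕ) < (j : ℕ) ∧ Und k ⟨(i, ws m, ws j) ::ₘ s.A, s.D, s.G⟩ := by
    by_contra hc
    push Not at hc
    exact hs (SDer.apc hk i ws fun m j h => not_not.1 (hc m j h))
  obtain ⟨m, j, hmj, hu⟩ := this
  exact ⟨_, hu, ⟨fun t h => Multiset.mem_cons_of_mem h, fun _ h => h, fun _ _ h => Or.inl h⟩,
    fun _ => ⟨m, j, hmj, Multiset.mem_cons_self _ _⟩⟩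

/-- Tasks of the proof search. -/
abbrev Task (n k : ℕ) : Type :=
  (ℕ × SFml n) ⊕ (ℕ × ℕ × SFml n) ⊕ (ℕ × SFml n) ⊕ (Fin (n + 1) → ℕ) ⊕
    (Fin (n + 1) × (Fin (k + 1) → ℕ))

/-- The task has been carried out by the given search step. -/
def Done {n k : ℕ} (s s' : St n) : Task n k → Prop
  | Sum.inl (w, φ) => (w, φ) ∈ s.G → cons φ → Proc s' w φ
  | Sum.inr (Sum.inl (w, v, φ)) => (w, φ) ∈ s.G → ∀ a, Tgt s w v a φ → (v, a) ∈ s'.G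
  | Sum.inr (Sum.inr (Sum.inl (w, φ))) =>
      (w, φ) ∈ s.G → ∀ i a, φ = SFml.per i a → ∃ u, (i, u) ∈ s'.D
  | Sum.inr (Sum.inr (Sum.inr (Sum.inl ws))) => ∃ u, ∀ i, (i, ws i, u) ∈ s'.A
  | Sum.inr (Sum.inr (Sum.inr (Sum.inr (i, ws)))) =>
      0 < k → ∃ m j : Fin (k + 1), (m : ℕ) < (j : ℕ) ∧ (i, ws m, ws j) ∈ s'.A

theorem exists_step {n k : ℕ} (s : {s : St n // Und k s}) (τ : Task n k) :
    ∃ s' : {s : St n // Und k s}, Ext s.1 s'.1 ∧ Done s.1 s'.1 τ := by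
  obtain ⟨s, hs⟩ := s
  suffices h : ∃ s', Und k s' ∧ Ext s s' ∧ Done s s' τ by
    obtain ⟨s', h1, h2⟩ := h
    exact ⟨⟨s', h1⟩, h2⟩
  rcases τ with ⟨w, φ⟩ | ⟨w, v, φ⟩ | ⟨w, φ⟩ | ws | ⟨i, ws⟩
  · exact step_cons s hs w φ
  · exact step_prop s hs w v φ
  · exact step_per s hs w φ
  · exact step_ioa s hs ws
  · exact step_apc s hs i ws

theorem exists_run {n k : ℕ} (s : St n) (hs : Und k s) :
    ∃ S : ℕ → St n, S 0 = s ∧ (∀ t, Und k (S t)) ∧ (∀ t, Ext (S t) (S (t + 1))) ∧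
      ∀ (τ : Task n k) (t0 : ℕ), ∃ t, t0 ≤ t ∧ Done (S t) (S (t + 1)) τ := by
  choose f hf using exists_step (n := n) (k := k)
  have : Nonempty (Task n k) := ⟨Sum.inl (0, SFml.pos 0)⟩
  obtain ⟨g, hg⟩ := exists_surjective_nat (Task n k)
  let S : ℕ → {s : St n // Und k s} :=
    fun t => Nat.rec ⟨s, hs⟩ (fun t x => f x (g (Nat.unpair t).1)) t
  have hS : ∀ t, S (t + 1) = f (S t) (g (Nat.unpair t).1) := fun t => rfl
  refine ⟨fun t => (S t).1, rfl, fun t => (S t).2, fun t => ?_, fun τ t0 => ?_⟩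
  · exact (hf (S t) (g (Nat.unpair t).1)).1
  · obtain ⟨a, rfl⟩ := hg τ
    refine ⟨Nat.pair a t0, Nat.right_le_pair _ _, ?_⟩
    have := (hf (S (Nat.pair a t0)) (g a)).2
    have e := hS (Nat.pair a t0)
    rw [Nat.unpair_pair] at e
    rw [← e] at this
    exact this

section IPathLemmas
variable {n : ℕ} {RA RA' : RAt n} {i : Fin (n + 1)} {w u v : ℕ}

theorem IPath.mono (hs : ∀ t ∈ RA, t ∈ RA') (h : IPath RA i w u) : IPath RA' i w u := by
  induction h with
  | refl w => exact IPath.refl w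
  | fwd h _ ih => exact IPath.fwd (hs _ h) ih
  | bwd h _ ih => exact IPath.bwd (hs _ h) ih

theorem IPath.tr (h : IPath RA i w u) (h' : IPath RA i u v) : IPath RA i w v := by
  induction h with
  | refl w => exact h'
  | fwd h _ ih => exact IPath.fwd h (ih h')
  | bwd h _ ih => exact IPath.bwd h (ih h')

theorem IPath.sy (h : IPath RA i w u) : IPath RA i u w := by
  induction h with
  | refl w => exact IPath.refl w
  | fwd h _ ih => exact ih.tr (IPath.bwd h (IPath.refl _))
  | bwd h _ ih => exact ih.tr (IPath.fwd h (IPath.refl _))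

end IPathLemmas

theorem main_completeness {n k : ℕ} {RA : RAt n} {IA : DAt n} {Γ : SSeq n}
    (h : DSLStr n k RA IA Γ) : DSL n k RA IA Γ := by
  by_contra hund
  obtain ⟨S, hS0, hU, hE, hD⟩ := exists_run (k := k) ⟨RA, IA, Γ⟩ hund
  have hA : ∀ {t t'}, t ≤ t' → ∀ x ∈ (S t).A, x ∈ (S t').A := by
    intro t t' htt
    induction htt with
    | refl => exact fun _ h => h
    | step _ ih => exact fun x hx => (hE _).A x (ih x hx)
  have hI : ∀ {t t'}, t ≤ t' → ∀ x ∈ (S t).D, x ∈ (S t').D := by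
    intro t t' htt
    induction htt with
    | refl => exact fun _ h => h
    | step _ ih => exact fun x hx => (hE _).D x (ih x hx)
  have hG : ∀ {t t' w φ}, t ≤ t' → (w, φ) ∈ (S t).G →
      (w, φ) ∈ (S t').G ∨ ∃ r, Proc (S r) w φ := by
    intro t t' w φ htt hin
    induction htt with
    | refl => exact Or.inl hin
    | step _ ih =>
      rcases ih with ih | ih
      · exact ((hE _).G w φ ih).imp_right fun h => ⟨_, h⟩
      · exact Or.inr ih
  have hC : ∀ {t w φ}, (w, φ) ∈ (S t).G → cons φ → ∃ r, Proc (S r) w φ := by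
    intro t w φ hin hc
    obtain ⟨t', htt, hd⟩ := hD (Sum.inl (w, φ)) t
    rcases hG htt hin with h | h
    · exact ⟨_, hd h hc⟩
    · exact h
  have hP : ∀ {t w φ}, (w, φ) ∈ (S t).G → (∀ s : St n, ¬ Proc s w φ) → ∀ {t'}, t ≤ t' →
      (w, φ) ∈ (S t').G := by
    intro t w φ hin hn t' htt
    exact (hG htt hin).resolve_right fun ⟨r, hr⟩ => hn _ hr
  let M : Mdl n k :=
    { R := fun i w u => ∃ t, IPath (S t).A i w u
      rfl' := fun i w => ⟨0, IPath.refl w⟩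
      symm' := fun i w u ⟨t, h⟩ => ⟨t, h.sy⟩
      trans' := fun i w u v ⟨t, h⟩ ⟨t', h'⟩ => ⟨max t t',
        (h.mono (hA (le_max_left _ _))).tr (h'.mono (hA (le_max_right _ _)))⟩
      ioa := fun ws => by
        obtain ⟨t, _, u, hu⟩ := hD (Sum.inr (Sum.inr (Sum.inr (Sum.inl ws)))) 0
        exact ⟨u, fun i => ⟨_, IPath.fwd (hu i) (IPath.refl _)⟩⟩
      apc := fun hk i ws => by
        obtain ⟨t, _, hd⟩ := hD (Sum.inr (Sum.inr (Sum.inr (Sum.inr (i, ws))))) 0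
        obtain ⟨m, j, hmj, hr⟩ := hd hk
        exact ⟨m, j, hmj, _, IPath.fwd hr (IPath.refl _)⟩
      I := fun i v => (∃ t u, (i, u) ∈ (S t).D) → ∃ t u, (i, u) ∈ (S t).D ∧ IPath (S t).A i u v
      ne := fun i => by
        by_cases hex : ∃ t u, (i, u) ∈ (S t).D
        · obtain ⟨t, u, hu⟩ := hex
          exact ⟨u, fun _ => ⟨t, u, hu, IPath.refl _⟩⟩
        · exact ⟨0, fun h => (hex h).elim⟩
      cl := fun i u v hu ⟨t', h'⟩ hex => by
        obtain ⟨t, x, hx, hp⟩ := hu hex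
        exact ⟨max t t', x, hI (le_max_left _ _) _ hx,
          (hp.mono (hA (le_max_left _ _))).tr (h'.mono (hA (le_max_right _ _)))⟩
      V := fun p w => ∃ t, (w, SFml.neg p) ∈ (S t).G }
  have truth : ∀ (φ : SFml n) (t w : ℕ), (w, φ) ∈ (S t).G → ¬ sat M φ w := by
    intro φ
    induction φ with
    | pos p =>
      rintro t w hin ⟨t', hin'⟩
      have h1 := hP hin (fun _ h => h) (le_max_left t t')
      have h2 := hP hin' (fun _ h => h) (le_max_right t t')
      refine hU (max t t') ?_
      obtain ⟨Δ, hΔ⟩ := Multiset.exists_cons_of_mem h1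
      rw [hΔ, Multiset.mem_cons] at h2
      rcases h2 with h2 | h2
      · cases h2
      · obtain ⟨Δ', rfl⟩ := Multiset.exists_cons_of_mem h2
        rw [hΔ]
        exact SDer.id _ _ _ _ _
    | neg p => exact fun t w hin hs => hs ⟨t, hin⟩
    | or a b iha ihb =>
      intro t w hin hs
      obtain ⟨r, h1, h2⟩ := hC hin trivial
      exact hs.elim (iha _ _ h1) (ihb _ _ h2)
    | and a b iha ihb =>
      intro t w hin hs
      obtain ⟨r, h1 | h1⟩ := hC hin trivial
      · exact iha _ _ h1 hs.1
      · exact ihb _ _ h1 hs.2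
    | box a ih =>
      intro t w hin hs
      obtain ⟨r, u, hu⟩ := hC hin trivial
      exact ih _ _ hu (hs u)
    | abox i a ih =>
      intro t w hin hs
      obtain ⟨r, u, hr, hu⟩ := hC hin trivial
      exact ih _ _ hu (hs u ⟨r, IPath.fwd hr (IPath.refl _)⟩)
    | obl i a ih =>
      intro t w hin hs
      obtain ⟨r, u, hr, hu⟩ := hC hin trivial
      exact ih _ _ hu (hs u fun _ => ⟨r, u, hr, IPath.refl _⟩)
    | dia a ih =>
      rintro t w hin ⟨u, hs⟩
      obtain ⟨t', htt, hd⟩ := hD (Sum.inr (Sum.inl (w, u, SFml.dia a))) t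
      exact ih _ _ (hd (hP hin (fun _ h => h) htt) a rfl) hs
    | adia i a ih =>
      rintro t w hin ⟨u, ⟨r, hr⟩, hs⟩
      obtain ⟨t', htt, hd⟩ := hD (Sum.inr (Sum.inl (w, u, SFml.adia i a))) (max t r)
      exact ih _ _ (hd (hP hin (fun _ h => h) ((le_max_left _ _).trans htt)) a
        ⟨rfl, hr.mono (hA ((le_max_right _ _).trans htt))⟩) hs
    | per i a ih =>
      rintro t w hin ⟨v, hv, hs⟩
      obtain ⟨t1, ht1, hd1⟩ := hD (Sum.inr (Sum.inr (Sum.inl (w, SFml.per i a)))) t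
      obtain ⟨u0, hu0⟩ := hd1 (hP hin (fun _ h => h) ht1) i a rfl
      obtain ⟨r, u, hu, hr⟩ := hv ⟨_, u0, hu0⟩
      obtain ⟨t', htt, hd⟩ := hD (Sum.inr (Sum.inl (w, v, SFml.per i a))) (max t r)
      exact ih _ _ (hd (hP hin (fun _ h => h) ((le_max_left _ _).trans htt)) a
        ⟨rfl, u, hI ((le_max_right _ _).trans htt) _ hu,
          hr.mono (hA ((le_max_right _ _).trans htt))⟩) hs
  obtain ⟨⟨w, φ⟩, hin, hs⟩ := soundness M h (fun x => x)
    (fun t ht => ⟨0, IPath.fwd (by rw [hS0]; exact ht) (IPath.refl _)⟩)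
    (fun t ht _ => ⟨0, t.2, by rw [hS0]; exact ht, IPath.refl _⟩)
  exact truth φ 0 w (by rw [hS0]; exact hin) hs

/-- For all `n, k ∈ ℕ`, the rules of `Str(DS)` — label
substitution, weakening, contraction of relational, deontic atoms and of
labelled formulae, and cut — are admissible in `DS_n^k L`: every labelled
sequent derivable in `DS_n^k L + Str(DS)` is derivable in `DS_n^k L`. -/
theorem str_admissible_in_dsl (n k : ℕ) (RA : RAt n) (IA : DAt n) (Γ : SSeq n)
    (h : DSLStr n k RA IA Γ) : DSL n k RA IA Γ := by
  exact main_completeness h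

end DeonticStit
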